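/- arXiv:2306.17750 — 7 statements merged into one kernel-verified Lean document; each statement's English description precedes it below -/
import Mathlib

section
/- Let E be a finite-dimensional real inner product space, H : E → E → ℝ, and g : E → E → E be such that for all θ and w, g θ w is the gradient at w of the map w' ↦ H θ w'. Assume there is F_θ ≥ 0 such that ‖g θ₁ w − g θ₂ w‖ ≤ F_θ‖θ₁ − θ₂‖ for all θ₁, θ₂, w, and there is F_w > 0 such that ⟪g θ w₁ − g θ w₂, w₁ − w₂⟫ ≥ F_w‖w₁ − w₂‖² for all θ, w₁, w₂. Let θ* ∈ E satisfy g θ* θ* = 0. If a sequence (θᵗ)_{t∈ℕ} satisfies g θᵗ θᵗ⁺¹ = 0 for all t, then ‖θᵗ⁺¹ − θ*‖ ≤ (F_θ / F_w) ‖θᵗ − θ*‖ for all t ∈ ℕ. -/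
open Filter RealInnerProductSpace

theorem stmt_2 {E : Type*} [NormedAddCommGroup E] [InnerProductSpace ℝ E]
    [FiniteDimensional ℝ E]
    (H : E → E → ℝ) (g : E → E → E)
    (hgrad : ∀ θ w, HasGradientAt (H θ) (g θ w) w)
    (Fθ Fw : ℝ) (hFθ : 0 ≤ Fθ) (hFw : 0 < Fw)
    (hLipθ : ∀ θ₁ θ₂ w, ‖g θ₁ w - g θ₂ w‖ ≤ Fθ * ‖θ₁ - θ₂‖)
    (hmono : ∀ θ w₁ w₂, ⟪g θ w₁ - g θ w₂, w₁ - w₂⟫ ≥ Fw * ‖w₁ - w₂‖ ^ 2)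
    (θstar : E) (hfix : g θstar θstar = 0)
    (θ : ℕ → E) (hseq : ∀ t : ℕ, g (θ t) (θ (t + 1)) = 0) :
    ∀ t : ℕ, ‖θ (t + 1) - θstar‖ ≤ (Fθ / Fw) * ‖θ t - θstar‖ := by
  intro t
  have h1 := hmono (θ t) (θ (t + 1)) θstar
  have h2 := hLipθ (θ t) θstar θstar
  have h3 := real_inner_le_norm (g (θ t) (θ (t + 1)) - g (θ t) θstar) (θ (t + 1) - θstar)
  rw [hseq t, zero_sub] at h1 h3
  rw [norm_neg] at h3
  rw [hfix, sub_zero] at h2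
  rw [div_mul_eq_mul_div, le_div_iff₀ hFw]
  rcases (norm_nonneg (θ (t + 1) - θstar)).eq_or_lt with h0 | h0
  · rw [← h0, zero_mul]
    positivity
  · have h4 : Fw * ‖θ (t + 1) - θstar‖ ^ 2 ≤
        (Fθ * ‖θ t - θstar‖) * ‖θ (t + 1) - θstar‖ :=
      (h1.le.trans h3).trans (mul_le_mul_of_nonneg_right h2 h0.le)
    refine le_of_mul_le_mul_right ?_ h0
    linarith [h4]
end

section
/- Let E be a finite-dimensional real inner product space, H : E → E → ℝ, and g : E → E → E be such that for all θ and w, g θ w is the gradient at w of the map w' ↦ H θ w'. Assume there is F_θ ≥ 0 such that ‖g θ₁ w − g θ₂ w‖ ≤ F_θ‖θ₁ − θ₂‖ for all θ₁, θ₂, w, and there is F_w > 0 such that ⟪g θ w₁ − g θ w₂, w₁ − w₂⟫ ≥ F_w‖w₁ − w₂‖² for all θ, w₁, w₂. Let θ* ∈ E satisfy g θ* θ* = 0, and let (θᵗ)_{t∈ℕ} satisfy g θᵗ θᵗ⁺¹ = 0 for all t. If F_θ < F_w, then θᵗ converges to θ* as t → ∞. -/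
open Filter RealInnerProductSpace

theorem stmt_3 {E : Type*} [NormedAddCommGroup E] [InnerProductSpace ℝ E]
    [FiniteDimensional ℝ E]
    (H : E → E → ℝ) (g : E → E → E)
    (hgrad : ∀ θ w, HasGradientAt (H θ) (g θ w) w)
    (Fθ Fw : ℝ) (hFθ : 0 ≤ Fθ) (hFw : 0 < Fw)
    (hLipθ : ∀ θ₁ θ₂ w, ‖g θ₁ w - g θ₂ w‖ ≤ Fθ * ‖θ₁ - θ₂‖)
    (hmono : ∀ θ w₁ w₂, ⟪g θ w₁ - g θ w₂, w₁ - w₂⟫ ≥ Fw * ‖w₁ - w₂‖ ^ 2)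
    (θstar : E) (hfix : g θstar θstar = 0)
    (θ : ℕ → E) (hseq : ∀ t : ℕ, g (θ t) (θ (t + 1)) = 0)
    (hlt : Fθ < Fw) :
    Tendsto θ atTop (nhds θstar) := by
  have step : ∀ t, ‖θ (t + 1) - θstar‖ ≤ (Fθ / Fw) * ‖θ t - θstar‖ := by
    intro t
    have h1 := hmono (θ t) (θ (t + 1)) θstar
    have h2 := hLipθ θstar (θ t) θstar
    rw [hseq t] at h1
    rw [hfix] at h2
    rw [norm_sub_rev θstar] at h2
    have h3 := real_inner_le_norm (0 - g (θ t) θstar) (θ (t + 1) - θstar)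
    have h4 : Fw * ‖θ (t + 1) - θstar‖ ≤ Fθ * ‖θ t - θstar‖ := by
      rcases (norm_nonneg (θ (t + 1) - θstar)).eq_or_lt with h0 | h0
      · rw [← h0, mul_zero]
        positivity
      · have h5 := mul_le_mul_of_nonneg_right h2 h0.le
        refine le_of_mul_le_mul_right ?_ h0
        nlinarith
    rw [div_mul_eq_mul_div, le_div_iff₀ hFw]
    linarith
  have hr0 : 0 ≤ Fθ / Fw := by positivity
  have hr1 : Fθ / Fw < 1 := (div_lt_one hFw).2 hlt
  have bound : ∀ t, ‖θ t - θstar‖ ≤ (Fθ / Fw) ^ t * ‖θ 0 - θstar‖ := by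
    intro t
    induction t with
    | zero => simp
    | succ k ih =>
      calc _ ≤ _ := step k
        _ ≤ (Fθ / Fw) * ((Fθ / Fw) ^ k * ‖θ 0 - θstar‖) :=
          mul_le_mul_of_nonneg_left ih hr0
        _ = _ := by ring
  rw [tendsto_iff_norm_sub_tendsto_zero]
  refine squeeze_zero (fun t => norm_nonneg _) bound ?_
  simpa using (tendsto_pow_atTop_nhds_zero_of_lt_one hr0 hr1).mul_const ‖θ 0 - θstar‖
end

section
/- Let E be a finite-dimensional real inner product space, H : E → E → ℝ, and g : E → E → E be such that for all θ and w, g θ w is the gradient at w of the map w' ↦ H θ w'. Assume: (i) there is F_θ ≥ 0 such that ‖g θ₁ w − g θ₂ w‖ ≤ F_θ‖θ₁ − θ₂‖ for all θ₁, θ₂, w; (ii) there is F_w > 0 such that H θ w₂ ≥ H θ w₁ + ⟪g θ w₁, w₂ − w₁⟫ + (F_w/2)‖w₂ − w₁‖² for all θ, w₁, w₂; (iii) there is L ≥ F_w, L > 0, such that ‖g θ w₁ − g θ w₂‖ ≤ L‖w₁ − w₂‖ and H θ w₂ ≤ H θ w₁ + ⟪g θ w₁, w₂ − w₁⟫ +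 (L/2)‖w₂ − w₁‖² for all θ, w₁, w₂. Let θ* satisfy g θ* θ* = 0, fix K ≥ 1, and define the sequence (θᵗ) by: wᵗ'⁰ = θᵗ, wᵗ'ᵏ⁺¹ = wᵗ'ᵏ − (1/L) g θᵗ wᵗ'ᵏ for 0 ≤ k ≤ K−1, and θᵗ⁺¹ = wᵗ'ᴷ. Then for every t ∈ ℕ, ‖θᵗ⁺¹ − θ*‖² ≤ σ_K² ‖θᵗ − θ*‖², where σ_K² = (1 − κ)ᴷ (1 − η²) + η², κ = F_w/L, and η = F_θ/F_w. -/
open Filter RealInnerProductSpace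

theorem stmt_4 {E : Type*} [NormedAddCommGroup E] [InnerProductSpace ℝ E]
    [FiniteDimensional ℝ E]
    (H : E → E → ℝ) (g : E → E → E)
    (hgrad : ∀ θ w, HasGradientAt (H θ) (g θ w) w)
    (Fθ Fw L : ℝ) (hFθ : 0 ≤ Fθ) (hFw : 0 < Fw) (hL : 0 < L) (hFwL : Fw ≤ L)
    (hLipθ : ∀ θ₁ θ₂ w, ‖g θ₁ w - g θ₂ w‖ ≤ Fθ * ‖θ₁ - θ₂‖)
    (hsc : ∀ θ w₁ w₂, H θ w₁ + ⟪g θ w₁, w₂ - w₁⟫ + Fw / 2 * ‖w₂ - w₁‖ ^ 2 ≤ H θ w₂)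
    (hLipw : ∀ θ w₁ w₂, ‖g θ w₁ - g θ w₂‖ ≤ L * ‖w₁ - w₂‖)
    (hsm : ∀ θ w₁ w₂, H θ w₂ ≤ H θ w₁ + ⟪g θ w₁, w₂ - w₁⟫ + L / 2 * ‖w₂ - w₁‖ ^ 2)
    (θstar : E) (hfix : g θstar θstar = 0)
    (K : ℕ) (hK : 1 ≤ K)
    (θ : ℕ → E) (w : ℕ → ℕ → E)
    (hw0 : ∀ t, w t 0 = θ t)
    (hwk : ∀ t k, k < K → w t (k + 1) = w t k - (1 / L) • g (θ t) (w t k))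
    (hθ : ∀ t, θ (t + 1) = w t K) :
    ∀ t : ℕ,
      ‖θ (t + 1) - θstar‖ ^ 2 ≤
        ((1 - Fw / L) ^ K * (1 - (Fθ / Fw) ^ 2) + (Fθ / Fw) ^ 2) * ‖θ t - θstar‖ ^ 2 := by
  intro t
  set D := ‖θ t - θstar‖ with hD
  have hk0 : 0 ≤ 1 - Fw / L := by
    have : Fw / L ≤ 1 := (div_le_one hL).2 hFwL
    linarith
  -- one gradient step
  have step : ∀ x : E, ‖x - (1 / L) • g (θ t) x - θstar‖ ^ 2 ≤
      (1 - Fw / L) * ‖x - θstar‖ ^ 2 + Fw / L * ((Fθ / Fw) ^ 2 * D ^ 2) := by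
    intro x
    obtain ⟨y, hy⟩ : ∃ y, y = x - (1 / L) • g (θ t) x := ⟨_, rfl⟩
    rw [← hy]
    have h1 := hsm (θ t) x y
    have h2 := hsc (θ t) x θstar
    have h3 := hsc (θ t) θstar y
    have h4 := hLipθ (θ t) θstar θstar
    rw [hfix, sub_zero, ← hD] at h4
    have hyx : y - x = -((1 / L) • g (θ t) x) := by rw [hy]; abel
    have e1 : ⟪g (θ t) x, y - x⟫ = -(1 / L * ‖g (θ t) x‖ ^ 2) := by
      rw [hyx, inner_neg_right, inner_smul_right, real_inner_self_eq_norm_sq]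
    have e2 : ‖y - x‖ ^ 2 = (1 / L) ^ 2 * ‖g (θ t) x‖ ^ 2 := by
      rw [hyx, norm_neg, norm_smul, mul_pow, Real.norm_eq_abs, sq_abs]
    have e3 : ‖y - θstar‖ ^ 2 = ‖x - θstar‖ ^ 2 + 2 * (1 / L * ⟪g (θ t) x, θstar - x⟫)
        + (1 / L) ^ 2 * ‖g (θ t) x‖ ^ 2 := by
      have : y - θstar = (x - θstar) + (y - x) := by abel
      rw [this, norm_add_sq_real, e2, hyx, inner_neg_right, inner_smul_right,
        real_inner_comm, ← neg_sub x θstar, inner_neg_right]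
      ring
    have h5 : -(‖g (θ t) θstar‖ * ‖y - θstar‖) ≤ ⟪g (θ t) θstar, y - θstar⟫ :=
      neg_le_of_abs_le (abs_real_inner_le_norm _ _)
    have e4 : ‖θstar - x‖ = ‖x - θstar‖ := norm_sub_rev _ _
    rw [e1, e2] at h1
    rw [e4] at h2
    have h6 : ‖g (θ t) θstar‖ * ‖y - θstar‖ ≤ Fθ * D * ‖y - θstar‖ :=
      mul_le_mul_of_nonneg_right h4 (norm_nonneg _)
    have h7 : Fθ * D * ‖y - θstar‖ - Fw / 2 * ‖y - θstar‖ ^ 2 ≤ (Fθ * D) ^ 2 / (2 * Fw) := by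
      rw [le_div_iff₀ (by positivity)]
      nlinarith [sq_nonneg (Fθ * D - Fw * ‖y - θstar‖)]
    have h8 : H (θ t) θstar - H (θ t) y ≤ (Fθ * D) ^ 2 / (2 * Fw) := by linarith
    have h9 : 0 ≤ 2 / L * ((Fθ * D) ^ 2 / (2 * Fw) - ⟪g (θ t) x, θstar - x⟫
        - Fw / 2 * ‖x - θstar‖ ^ 2 + (-(1 / L * ‖g (θ t) x‖ ^ 2)
        + L / 2 * ((1 / L) ^ 2 * ‖g (θ t) x‖ ^ 2))) :=
      mul_nonneg (by positivity) (by linarith)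
    rw [e3, ← sub_nonneg]
    convert h9 using 1
    field_simp
    ring
  have main : ∀ k, k ≤ K → ‖w t k - θstar‖ ^ 2 ≤
      ((1 - Fw / L) ^ k * (1 - (Fθ / Fw) ^ 2) + (Fθ / Fw) ^ 2) * D ^ 2 := by
    intro k
    induction k with
    | zero => intro _; rw [hw0, ← hD]; simp
    | succ k ih =>
      intro hk
      rw [hwk t k (by omega)]
      refine (step _).trans ?_
      have := mul_le_mul_of_nonneg_left (ih (by omega)) hk0
      refine (add_le_add_left this _).trans (le_of_eq ?_)
      ring
  rw [hθ]
  exact main K le_rfl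
end

section
/- Let E be a finite-dimensional real inner product space, H : E → E → ℝ, and g : E → E → E be such that for all θ and w, g θ w is the gradient at w of the map w' ↦ H θ w'. Assume: (i) there is F_θ ≥ 0 such that ‖g θ₁ w − g θ₂ w‖ ≤ F_θ‖θ₁ − θ₂‖ for all θ₁, θ₂, w; (ii) there is F_w > 0 such that H θ w₂ ≥ H θ w₁ + ⟪g θ w₁, w₂ − w₁⟫ + (F_w/2)‖w₂ − w₁‖² for all θ, w₁, w₂; (iii) there is L ≥ F_w, L > 0, such that ‖g θ w₁ − g θ w₂‖ ≤ L‖w₁ − w₂‖ and H θ w₂ ≤ H θ w₁ + ⟪g θ w₁, w₂ − w₁⟫ + (L/2)‖w₂ − w₁‖² for all θ, w₁, w₂. Let θ* satisfy g θ* θ* = 0, fix K ≥ 1, and define (θᵗ) by: wᵗ'⁰ = θᵗ, wᵗ'ᵏ⁺¹ = wᵗ'ᵏ − (1/L) g θᵗ wᵗ'ᵏ for 0 ≤ k ≤ K−1, and θᵗ⁺¹ = wᵗ'ᴷ. If F_θ < F_w, then θᵗ converges to θ* as t → ∞. -/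
open Filter RealInnerProductSpace

theorem aux_half {E : Type*} [NormedAddCommGroup E] [InnerProductSpace ℝ E]
    (φ : E → ℝ) (G : E → E) (M : ℝ) (hM : 0 < M)
    (hc : ∀ x y, φ x + ⟪G x, y - x⟫ ≤ φ y)
    (hs : ∀ x y, φ y ≤ φ x + ⟪G x, y - x⟫ + M / 2 * ‖y - x‖ ^ 2) (x y : E) :
    φ x + ⟪G x, y - x⟫ + 1 / (2 * M) * ‖G y - G x‖ ^ 2 ≤ φ y := by
  have h1 := hc x (y - (1 / M) • (G y - G x))
  have h2 := hs y (y - (1 / M) • (G y - G x))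
  have e1 : y - (1 / M) • (G y - G x) - x = (y - x) - (1 / M) • (G y - G x) := by abel
  have e2 : y - (1 / M) • (G y - G x) - y = -((1 / M) • (G y - G x)) := by abel
  have e3 : ⟪G y, G y - G x⟫ - ⟪G x, G y - G x⟫ = ‖G y - G x‖ ^ 2 := by
    rw [← inner_sub_left, real_inner_self_eq_norm_sq]
  rw [e1, inner_sub_right, inner_smul_right] at h1
  rw [e2, inner_neg_right, inner_smul_right, norm_neg, norm_smul, Real.norm_eq_abs,
    mul_pow, sq_abs] at h2
  have e4 : M / 2 * ((1 / M) ^ 2 * ‖G y - G x‖ ^ 2) = 1 / (2 * M) * ‖G y - G x‖ ^ 2 := by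
    field_simp
  have e5 : 1 / M * ⟪G y, G y - G x⟫ - 1 / M * ⟪G x, G y - G x⟫
      = 2 * (1 / (2 * M) * ‖G y - G x‖ ^ 2) := by
    rw [← mul_sub, e3]; field_simp
  linarith

theorem aux_lip {E : Type*} [NormedAddCommGroup E] [InnerProductSpace ℝ E]
    (φ : E → ℝ) (G : E → E) (M : ℝ) (hM : 0 < M)
    (hc : ∀ x y, φ x + ⟪G x, y - x⟫ ≤ φ y)
    (hs : ∀ x y, φ y ≤ φ x + ⟪G x, y - x⟫ + M / 2 * ‖y - x‖ ^ 2) (x y : E) :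
    ‖G y - G x‖ ≤ M * ‖y - x‖ := by
  have h1 := aux_half φ G M hM hc hs x y
  have h2 := aux_half φ G M hM hc hs y x
  rw [norm_sub_rev (G x) (G y), ← neg_sub y x, inner_neg_right] at h2
  have h3 : ⟪G y - G x, y - x⟫ ≤ ‖G y - G x‖ * ‖y - x‖ := real_inner_le_norm _ _
  rw [inner_sub_left] at h3
  have e : 1 / (2 * M) * ‖G y - G x‖ ^ 2 + 1 / (2 * M) * ‖G y - G x‖ ^ 2
      = ‖G y - G x‖ ^ 2 / M := by field_simp; ring
  have h4 : ‖G y - G x‖ ^ 2 / M ≤ ‖G y - G x‖ * ‖y - x‖ := by linarith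
  rw [div_le_iff₀ hM] at h4
  rcases (norm_nonneg (G y - G x)).eq_or_lt with h | h
  · rw [← h]; positivity
  · nlinarith

theorem aux_gd {E : Type*} [NormedAddCommGroup E] [InnerProductSpace ℝ E]
    (f : E → ℝ) (g : E → E) (m L : ℝ) (hL : 0 < L) (hmL : m < L)
    (hsc : ∀ x y, f x + ⟪g x, y - x⟫ + m / 2 * ‖y - x‖ ^ 2 ≤ f y)
    (hsm : ∀ x y, f y ≤ f x + ⟪g x, y - x⟫ + L / 2 * ‖y - x‖ ^ 2) (x y : E) :
    ‖(y - (1 / L) • g y) - (x - (1 / L) • g x)‖ ≤ (1 - m / L) * ‖y - x‖ := by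
  have key : ∀ x y : E, ‖y‖ ^ 2 = ‖x‖ ^ 2 + 2 * ⟪x, y - x⟫ + ‖y - x‖ ^ 2 := by
    intro x y
    have := norm_add_sq_real x (y - x)
    rwa [add_sub_cancel] at this
  refine aux_lip (fun w => 1 / 2 * ‖w‖ ^ 2 - 1 / L * f w) (fun w => w - (1 / L) • g w)
    (1 - m / L) (by rw [sub_pos, div_lt_one hL]; exact hmL) ?_ ?_ x y
  · intro x y
    have h := mul_le_mul_of_nonneg_left (hsm x y) (by positivity : 0 ≤ 1 / L)
    have e : 1 / L * (f x + ⟪g x, y - x⟫ + L / 2 * ‖y - x‖ ^ 2)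
      = 1 / L * f x + 1 / L * ⟪g x, y - x⟫ + 1 / 2 * ‖y - x‖ ^ 2 := by field_simp
    have k := key x y
    simp only [inner_sub_left, real_inner_smul_left]
    linarith
  · intro x y
    have h := mul_le_mul_of_nonneg_left (hsc x y) (by positivity : 0 ≤ 1 / L)
    have e : 1 / L * (f x + ⟪g x, y - x⟫ + m / 2 * ‖y - x‖ ^ 2)
      = 1 / L * f x + 1 / L * ⟪g x, y - x⟫ + m / L / 2 * ‖y - x‖ ^ 2 := by field_simp
    have k := key x y
    simp only [inner_sub_left, real_inner_smul_left]
    linarith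

theorem stmt_5 {E : Type*} [NormedAddCommGroup E] [InnerProductSpace ℝ E]
    [FiniteDimensional ℝ E]
    (H : E → E → ℝ) (g : E → E → E)
    (hgrad : ∀ θ w, HasGradientAt (H θ) (g θ w) w)
    (Fθ Fw L : ℝ) (hFθ : 0 ≤ Fθ) (hFw : 0 < Fw) (hL : 0 < L) (hFwL : Fw ≤ L)
    (hLipθ : ∀ θ₁ θ₂ w, ‖g θ₁ w - g θ₂ w‖ ≤ Fθ * ‖θ₁ - θ₂‖)
    (hsc : ∀ θ w₁ w₂, H θ w₁ + ⟪g θ w₁, w₂ - w₁⟫ + Fw / 2 * ‖w₂ - w₁‖ ^ 2 ≤ H θ w₂)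
    (hLipw : ∀ θ w₁ w₂, ‖g θ w₁ - g θ w₂‖ ≤ L * ‖w₁ - w₂‖)
    (hsm : ∀ θ w₁ w₂, H θ w₂ ≤ H θ w₁ + ⟪g θ w₁, w₂ - w₁⟫ + L / 2 * ‖w₂ - w₁‖ ^ 2)
    (θstar : E) (hfix : g θstar θstar = 0)
    (K : ℕ) (hK : 1 ≤ K)
    (θ : ℕ → E) (w : ℕ → ℕ → E)
    (hw0 : ∀ t, w t 0 = θ t)
    (hwk : ∀ t k, k < K → w t (k + 1) = w t k - (1 / L) • g (θ t) (w t k))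
    (hθ : ∀ t, θ (t + 1) = w t K)
    (hlt : Fθ < Fw) :
    Tendsto θ atTop (nhds θstar) := by
  obtain ⟨m, hm1, hm2⟩ := exists_between hlt
  have hmL : m < L := hm2.trans_le hFwL
  have hsc' : ∀ θ w₁ w₂, H θ w₁ + ⟪g θ w₁, w₂ - w₁⟫ + m / 2 * ‖w₂ - w₁‖ ^ 2 ≤ H θ w₂ := by
    intro θ w₁ w₂
    have h := hsc θ w₁ w₂
    have h' : m / 2 * ‖w₂ - w₁‖ ^ 2 ≤ Fw / 2 * ‖w₂ - w₁‖ ^ 2 := by gcongr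
    linarith
  have hstep : ∀ t k, k < K → ‖w t (k + 1) - θstar‖ ≤
      (1 - m / L) * ‖w t k - θstar‖ + Fθ / L * ‖θ t - θstar‖ := by
    intro t k hk
    have h1 := aux_gd (H (θ t)) (g (θ t)) m L hL hmL (hsc' _) (hsm _) θstar (w t k)
    have h2 := hLipθ (θ t) θstar θstar
    rw [hfix, sub_zero] at h2
    have e : w t (k + 1) - θstar = ((w t k - (1 / L) • g (θ t) (w t k))
        - (θstar - (1 / L) • g (θ t) θstar)) - (1 / L) • g (θ t) θstar := by
      rw [hwk t k hk]; abel
    rw [e]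
    refine (norm_sub_le _ _).trans (add_le_add h1 ?_)
    rw [norm_smul, Real.norm_of_nonneg (by positivity)]
    calc 1 / L * ‖g (θ t) θstar‖ ≤ 1 / L * (Fθ * ‖θ t - θstar‖) := by gcongr
      _ = _ := by ring
  have hML : 0 ≤ 1 - m / L := by rw [sub_nonneg, div_le_one hL]; exact hmL.le
  have hq : Fθ / L < m / L := by gcongr
  have hF0 : 0 ≤ Fθ / L := by positivity
  have hle : ∀ t k, k ≤ K → ‖w t k - θstar‖ ≤ ‖θ t - θstar‖ := by
    intro t k
    induction k with
    | zero => intro _; rw [hw0]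
    | succ k ih =>
      intro hk
      have h1 := hstep t k (by omega)
      have h2 := mul_le_mul_of_nonneg_left (ih (by omega)) hML
      nlinarith [norm_nonneg (θ t - θstar)]
  have hcontr : ∀ t, ‖θ (t + 1) - θstar‖ ≤ (1 - m / L + Fθ / L) * ‖θ t - θstar‖ := by
    intro t
    obtain ⟨j, rfl⟩ : ∃ j, K = j + 1 := ⟨K - 1, by omega⟩
    rw [hθ]
    have h1 := hstep t j (by omega)
    have h2 := mul_le_mul_of_nonneg_left (hle t j (by omega)) hML
    linarith
  have hpow : ∀ t, ‖θ t - θstar‖ ≤ (1 - m / L + Fθ / L) ^ t * ‖θ 0 - θstar‖ := by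
    intro t
    induction t with
    | zero => simp
    | succ t ih =>
      have h2 := mul_le_mul_of_nonneg_left ih (add_nonneg hML hF0)
      rw [pow_succ']
      linarith [hcontr t]
  rw [tendsto_iff_norm_sub_tendsto_zero]
  refine squeeze_zero (fun t => norm_nonneg _) hpow ?_
  have := (tendsto_pow_atTop_nhds_zero_of_lt_one (add_nonneg hML hF0)
    (by linarith : 1 - m / L + Fθ / L < 1)).mul_const ‖θ 0 - θstar‖
  simpa using this
end

section
/- Let E be a finite-dimensional real inner product space, H : E → E → ℝ, and g : E → E → E be such that for all θ and w, g θ w is the gradient at w of the map w' ↦ H θ w'. Assume: (i) there is F_θ ≥ 0 such that ‖g θ₁ w − g θ₂ w‖ ≤ F_θ‖θ₁ − θ₂‖ for all θ₁, θ₂, w; (ii) there is F_w > 0 such that H θ w₂ ≥ H θ w₁ + ⟪g θ w₁, w₂ − w₁⟫ + (F_w/2)‖w₂ − w₁‖² for all θ, w₁, w₂; (iii) there is L > 0 such that H θ w₂ ≤ H θ w₁ + ⟪g θ w₁, w₂ − w₁⟫ + (L/2)‖w₂ − w₁‖² for all θ, w₁, w₂. Let θ* satisfy g θ* θ* = 0,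 let α > 0, and let θ, w ∈ E with w' = w − α · g θ w. Then H θ θ* − H θ w ≤ (F_θ² / (2 F_w)) ‖θ − θ*‖² − (1/α − L/2) ‖w' − w‖². -/
open RealInnerProductSpace

theorem stmt_6 {E : Type*} [NormedAddCommGroup E] [InnerProductSpace ℝ E]
    [FiniteDimensional ℝ E]
    (H : E → E → ℝ) (g : E → E → E)
    (hgrad : ∀ θ w, HasGradientAt (H θ) (g θ w) w)
    (Fθ Fw L : ℝ) (hFθ : 0 ≤ Fθ) (hFw : 0 < Fw) (hL : 0 < L)
    (hLipθ : ∀ θ₁ θ₂ w, ‖g θ₁ w - g θ₂ w‖ ≤ Fθ * ‖θ₁ - θ₂‖)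
    (hsc : ∀ θ w₁ w₂, H θ w₁ + ⟪g θ w₁, w₂ - w₁⟫ + Fw / 2 * ‖w₂ - w₁‖ ^ 2 ≤ H θ w₂)
    (hsm : ∀ θ w₁ w₂, H θ w₂ ≤ H θ w₁ + ⟪g θ w₁, w₂ - w₁⟫ + L / 2 * ‖w₂ - w₁‖ ^ 2)
    (θstar : E) (hfix : g θstar θstar = 0)
    (α : ℝ) (hα : 0 < α)
    (θ w w' : E) (hw' : w' = w - α • g θ w) :
    H θ θstar - H θ w ≤
      Fθ ^ 2 / (2 * Fw) * ‖θ - θstar‖ ^ 2 - (1 / α - L / 2) * ‖w' - w‖ ^ 2 := by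
  have h1 := hsc θ θstar w'
  have h2 := hsm θ w w'
  have h3 : ⟪g θ w, w' - w⟫ = -(1 / α) * ‖w' - w‖ ^ 2 := by
    have e : w' - w = (-α) • g θ w := by rw [hw', neg_smul]; abel
    rw [e, inner_smul_right, norm_smul, real_inner_self_eq_norm_sq, mul_pow,
      Real.norm_eq_abs, sq_abs]
    field_simp
  have h4 : ‖g θ θstar‖ ≤ Fθ * ‖θ - θstar‖ := by
    have h := hLipθ θ θstar θstar
    rwa [hfix, sub_zero] at h
  have h5 := neg_le_of_abs_le (abs_real_inner_le_norm (g θ θstar) (w' - θstar))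
  have h6 : ‖g θ θstar‖ * ‖w' - θstar‖ ≤ Fθ * ‖θ - θstar‖ * ‖w' - θstar‖ :=
    mul_le_mul_of_nonneg_right h4 (norm_nonneg _)
  have h7 : Fθ * ‖θ - θstar‖ * ‖w' - θstar‖ ≤
      Fθ ^ 2 / (2 * Fw) * ‖θ - θstar‖ ^ 2 + Fw / 2 * ‖w' - θstar‖ ^ 2 := by
    have e : Fθ ^ 2 / (2 * Fw) * ‖θ - θstar‖ ^ 2 + Fw / 2 * ‖w' - θstar‖ ^ 2
        - Fθ * ‖θ - θstar‖ * ‖w' - θstar‖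
        = (Fθ * ‖θ - θstar‖ - Fw * ‖w' - θstar‖) ^ 2 / (2 * Fw) := by
      field_simp
      ring
    have : 0 ≤ (Fθ * ‖θ - θstar‖ - Fw * ‖w' - θstar‖) ^ 2 / (2 * Fw) := by positivity
    linarith
  rw [h3] at h2
  linarith
end

section
/- Let E be a finite-dimensional real inner product space, H : E → E → ℝ, and g : E → E → E be such that for all θ and w, g θ w is the gradient at w of the map w' ↦ H θ w'. Assume: (i) there is F_θ ≥ 0 such that ‖g θ₁ w − g θ₂ w‖ ≤ F_θ‖θ₁ − θ₂‖ for all θ₁, θ₂, w; (ii) there is F_w > 0 such that H θ w₂ ≥ H θ w₁ + ⟪g θ w₁, w₂ − w₁⟫ + (F_w/2)‖w₂ − w₁‖² for all θ, w₁, w₂; (iii) there is L > 0 such that H θ w₂ ≤ H θ w₁ + ⟪g θ w₁, w₂ − w₁⟫ + (L/2)‖w₂ − w₁‖² for all θ, w₁, w₂. Let θ* satisfy g θ* θ* = 0, and let θ, w ∈ E with w' = w − (1/L) · g θ w. Then ‖w' − θ*‖² ≤ (1 − F_w/L)‖w − θ*‖² + (F_θ² / (L F_w))‖θ − θ*‖².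 -/
open RealInnerProductSpace

theorem stmt_8 {E : Type*} [NormedAddCommGroup E] [InnerProductSpace ℝ E]
    [FiniteDimensional ℝ E]
    (H : E → E → ℝ) (g : E → E → E)
    (hgrad : ∀ θ w, HasGradientAt (H θ) (g θ w) w)
    (Fθ Fw L : ℝ) (hFθ : 0 ≤ Fθ) (hFw : 0 < Fw) (hL : 0 < L)
    (hLipθ : ∀ θ₁ θ₂ w, ‖g θ₁ w - g θ₂ w‖ ≤ Fθ * ‖θ₁ - θ₂‖)
    (hsc : ∀ θ w₁ w₂, H θ w₁ + ⟪g θ w₁, w₂ - w₁⟫ + Fw / 2 * ‖w₂ - w₁‖ ^ 2 ≤ H θ w₂)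
    (hsm : ∀ θ w₁ w₂, H θ w₂ ≤ H θ w₁ + ⟪g θ w₁, w₂ - w₁⟫ + L / 2 * ‖w₂ - w₁‖ ^ 2)
    (θstar : E) (hfix : g θstar θstar = 0)
    (θ w w' : E) (hw' : w' = w - (1 / L) • g θ w) :
    ‖w' - θstar‖ ^ 2 ≤
      (1 - Fw / L) * ‖w - θstar‖ ^ 2 + Fθ ^ 2 / (L * Fw) * ‖θ - θstar‖ ^ 2 := by
  have h1 := hsc θ w θstar
  have h2 := hsm θ w w'
  have h3 := hsc θ θstar w'
  have ha : ‖g θ θstar‖ ≤ Fθ * ‖θ - θstar‖ := by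
    have := hLipθ θ θstar θstar
    rwa [hfix, sub_zero] at this
  have hcs := abs_le.mp (abs_real_inner_le_norm (g θ θstar) (w' - θstar))
  have e1 : w' - w = -((1 / L) • g θ w) := by rw [hw']; abel
  have e2 : w' - θstar = (w - θstar) - (1 / L) • g θ w := by rw [hw']; abel
  have e3 : θstar - w = -(w - θstar) := by abel
  have n2 : ‖w' - θstar‖ ^ 2 = ‖w - θstar‖ ^ 2 - 2 * (1 / L * ⟪g θ w, w - θstar⟫)
      + (1 / L) ^ 2 * ‖g θ w‖ ^ 2 := by
    rw [e2, norm_sub_sq_real, inner_smul_right, norm_smul, real_inner_comm, mul_pow,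
      Real.norm_eq_abs, sq_abs]
  rw [e1, inner_neg_right, inner_smul_right, real_inner_self_eq_norm_sq, norm_neg, norm_smul,
    mul_pow, Real.norm_eq_abs, sq_abs] at h2
  rw [e3, inner_neg_right, norm_neg] at h1
  have h2' : H θ w' ≤ H θ w - (1 / L) * ‖g θ w‖ ^ 2 / 2 := by
    have : L / 2 * ((1 / L) ^ 2 * ‖g θ w‖ ^ 2) = (1 / L) * ‖g θ w‖ ^ 2 / 2 := by
      field_simp
    linarith
  have h4 : 2 * Fw * (H θ θstar - H θ w') ≤ (Fθ * ‖θ - θstar‖) ^ 2 := by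
    have hsq : ‖g θ θstar‖ ^ 2 ≤ (Fθ * ‖θ - θstar‖) ^ 2 :=
      pow_le_pow_left₀ (norm_nonneg _) ha 2
    have h5 : H θ θstar - H θ w' ≤
        ‖g θ θstar‖ * ‖w' - θstar‖ - Fw / 2 * ‖w' - θstar‖ ^ 2 := by linarith [hcs.1]
    have h6 := mul_le_mul_of_nonneg_left h5 (by positivity : 0 ≤ 2 * Fw)
    nlinarith [sq_nonneg (‖g θ θstar‖ - Fw * ‖w' - θstar‖)]
  have h7 : H θ θstar - H θ w' ≤ (Fθ * ‖θ - θstar‖) ^ 2 / (2 * Fw) := by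
    rw [le_div_iff₀ (by positivity)]; linarith
  have h8 : -⟪g θ w, w - θstar⟫ + (1 / L) * ‖g θ w‖ ^ 2 / 2 + Fw / 2 * ‖w - θstar‖ ^ 2
      ≤ (Fθ * ‖θ - θstar‖) ^ 2 / (2 * Fw) := by linarith
  have h9 := mul_le_mul_of_nonneg_left h8 (by positivity : 0 ≤ 2 / L)
  have h10 : 2 / L * ((Fθ * ‖θ - θstar‖) ^ 2 / (2 * Fw))
      = Fθ ^ 2 / (L * Fw) * ‖θ - θstar‖ ^ 2 := by field_simp
  rw [h10] at h9
  rw [n2]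
  refine le_trans (le_of_eq ?_) (add_le_add_right h9 ((1 - Fw / L) * ‖w - θstar‖ ^ 2))
  field_simp
  ring
end

section
/- Let S and A be finite nonempty types, E a finite-dimensional real inner product space, γ ≥ 0, d : S → ℝ with d(s) ≥ 0, π : S → A → ℝ with π(a|s) ≥ 0 and ∑_a π(a|s) = 1 for each s, and p : S → A → S → ℝ a transition kernel with p(s'|s,a) ≥ 0 and ∑_{s'} p(s'|s,a) = 1. Let q : S → A → E → ℝ and Dq : S → A → E → E be such that for every (s, a) and θ, the map θ' ↦ q s a θ' is Lipschitz with constant L_q(s,a) ≥ 0 and Dq s a w is its gradient at w (so ‖Dq s a w‖ ≤ L_q(s,a) for all w). Define G : E → E → E by G θ w = ∑_s d(s) ∑_a π(a|s) (q s a w − ∑_{s'} p(s'|s,a) (r(s,a,s') + γ · max_{a'} q s' a' θ)) • Dq s a w, for a bounded reward r : S → A → S → ℝ. Then there exists F_θ ≥ 0, namely F_θ = γ · max over the relevant expectations of L_q, such that ‖G θ₁ w − G θ₂ w‖ ≤ F_θ ‖θ₁ − θ₂‖ for all θ₁, θ₂ ∈ E and all w ∈ E; specifically one may take F_θ = γ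 · ∑_s d(s) ∑_a π(a|s) L_q(s,a) · ∑_{s'} p(s'|s,a) max_{a'} L_q(s',a'), which is bounded by γ · max_{s',a'} L_q(s',a')². -/
open Finset

theorem stmt_17 {S A : Type*} [Fintype S] [Fintype A] [Nonempty S] [Nonempty A]
    {E : Type*} [NormedAddCommGroup E] [InnerProductSpace ℝ E] [FiniteDimensional ℝ E]
    (γ : ℝ) (hγ : 0 ≤ γ)
    (d : S → ℝ) (hd : ∀ s, 0 ≤ d s) (hd1 : ∑ s, d s = 1)
    (π : S → A → ℝ) (hπ : ∀ s a, 0 ≤ π s a) (hπ1 : ∀ s, ∑ a, π s a = 1)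
    (p : S → A → S → ℝ) (hp : ∀ s a s', 0 ≤ p s a s') (hp1 : ∀ s a, ∑ s', p s a s' = 1)
    (r : S → A → S → ℝ) (hr : ∃ B : ℝ, ∀ s a s', |r s a s'| ≤ B)
    (q : S → A → E → ℝ) (Dq : S → A → E → E) (Lq : S → A → ℝ)
    (hLq : ∀ s a, 0 ≤ Lq s a)
    (hqLip : ∀ s a θ₁ θ₂, |q s a θ₁ - q s a θ₂| ≤ Lq s a * ‖θ₁ - θ₂‖)
    (hqgrad : ∀ s a w, HasGradientAt (q s a) (Dq s a w) w)
    (hDqB : ∀ s a w, ‖Dq s a w‖ ≤ Lq s a)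
    (G : E → E → E)
    (hG : ∀ θ w, G θ w =
      ∑ s, ∑ a,
        (d s * π s a *
          (q s a w -
            ∑ s', p s a s' *
              (r s a s' + γ * univ.sup' univ_nonempty (fun a' => q s' a' θ)))) •
          Dq s a w) :
    ∃ Fθ : ℝ, 0 ≤ Fθ ∧
      Fθ = γ * ∑ s, d s * ∑ a, π s a * Lq s a *
        ∑ s', p s a s' * univ.sup' univ_nonempty (fun a' => Lq s' a') ∧
      (∀ θ₁ θ₂ w : E, ‖G θ₁ w - G θ₂ w‖ ≤ Fθ * ‖θ₁ - θ₂‖) ∧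
      Fθ ≤ γ * (univ.sup' univ_nonempty (fun sa : S × A => Lq sa.1 sa.2)) ^ 2 := by
  have hM0 : ∀ s, 0 ≤ univ.sup' univ_nonempty (fun a' => Lq s a') := fun s =>
    (hLq s (Classical.arbitrary A)).trans
      (le_sup' (fun a' => Lq s a') (mem_univ (Classical.arbitrary A)))
  have hmLip1 : ∀ s θ₁ θ₂, univ.sup' univ_nonempty (fun a' => q s a' θ₁) ≤
      univ.sup' univ_nonempty (fun a' => q s a' θ₂) +
        univ.sup' univ_nonempty (fun a' => Lq s a') * ‖θ₁ - θ₂‖ := by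
    intro s θ₁ θ₂
    apply sup'_le
    intro a _
    have h1 := (abs_le.mp (hqLip s a θ₁ θ₂)).2
    have h2 := le_sup' (fun a' => q s a' θ₂) (mem_univ a)
    have h3 := mul_le_mul_of_nonneg_right (le_sup' (fun a' => Lq s a') (mem_univ a))
      (norm_nonneg (θ₁ - θ₂))
    linarith
  have hmLip : ∀ s θ₁ θ₂, |univ.sup' univ_nonempty (fun a' => q s a' θ₂) -
      univ.sup' univ_nonempty (fun a' => q s a' θ₁)| ≤
        univ.sup' univ_nonempty (fun a' => Lq s a') * ‖θ₁ - θ₂‖ := by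
    intro s θ₁ θ₂
    have h1 := hmLip1 s θ₁ θ₂
    have h2 := hmLip1 s θ₂ θ₁
    rw [norm_sub_rev θ₂ θ₁] at h2
    rw [abs_le]
    constructor <;> linarith
  have hMK : ∀ s, univ.sup' univ_nonempty (fun a' => Lq s a') ≤
      univ.sup' univ_nonempty (fun sa : S × A => Lq sa.1 sa.2) := fun s =>
    sup'_le _ _ fun a _ => le_sup' (fun sa : S × A => Lq sa.1 sa.2) (mem_univ (s, a))
  have hLK : ∀ s a, Lq s a ≤ univ.sup' univ_nonempty (fun sa : S × A => Lq sa.1 sa.2) :=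
    fun s a => le_sup' (fun sa : S × A => Lq sa.1 sa.2) (mem_univ (s, a))
  generalize univ.sup' univ_nonempty (fun sa : S × A => Lq sa.1 sa.2) = K at *
  obtain ⟨M, hM⟩ : ∃ M : S → ℝ, ∀ s, univ.sup' univ_nonempty (fun a' => Lq s a') = M s :=
    ⟨_, fun _ => rfl⟩
  obtain ⟨m, hm⟩ : ∃ m : S → E → ℝ,
      ∀ s θ, univ.sup' univ_nonempty (fun a' => q s a' θ) = m s θ := ⟨_, fun _ _ => rfl⟩
  simp only [hM, hm] at *
  have hK0 : 0 ≤ K := (hLq (Classical.arbitrary S) (Classical.arbitrary A)).trans (hLK _ _)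
  have hP0 : ∀ s a, 0 ≤ ∑ s', p s a s' * M s' := fun s a =>
    sum_nonneg fun s' _ => mul_nonneg (hp s a s') (hM0 s')
  have hPK : ∀ s a, ∑ s', p s a s' * M s' ≤ K := by
    intro s a
    calc ∑ s', p s a s' * M s' ≤ ∑ s', p s a s' * K :=
          sum_le_sum fun s' _ => mul_le_mul_of_nonneg_left (hMK s') (hp s a s')
      _ = K := by rw [← sum_mul, hp1, one_mul]
  refine ⟨_, ?_, rfl, ?_, ?_⟩
  · exact mul_nonneg hγ (sum_nonneg fun s _ => mul_nonneg (hd s) (sum_nonneg fun a _ =>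
      mul_nonneg (mul_nonneg (hπ s a) (hLq s a)) (hP0 s a)))
  · intro θ₁ θ₂ w
    have key : G θ₁ w - G θ₂ w = ∑ s, ∑ a, (d s * π s a *
        (γ * ∑ s', p s a s' * (m s' θ₂ - m s' θ₁))) • Dq s a w := by
      rw [hG, hG, ← sum_sub_distrib]
      refine sum_congr rfl fun s _ => ?_
      rw [← sum_sub_distrib]
      refine sum_congr rfl fun a _ => ?_
      rw [← sub_smul]
      congr 1
      simp only [mul_add, mul_sub, sum_add_distrib, sum_sub_distrib, mul_sum]
      have h : ∀ θ, ∑ i, d s * π s a * (p s a i * (γ * m i θ)) =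
          ∑ i, d s * π s a * (γ * (p s a i * m i θ)) := fun θ =>
        sum_congr rfl fun i _ => by ring
      rw [h, h]
      ring
    have hin : ∀ s a, |∑ s', p s a s' * (m s' θ₂ - m s' θ₁)| ≤
        (∑ s', p s a s' * M s') * ‖θ₁ - θ₂‖ := by
      intro s a
      refine (abs_sum_le_sum_abs _ _).trans ?_
      rw [sum_mul]
      refine sum_le_sum fun s' _ => ?_
      rw [abs_mul, abs_of_nonneg (hp s a s'), mul_assoc]
      exact mul_le_mul_of_nonneg_left (hmLip s' θ₁ θ₂) (hp s a s')
    rw [key]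
    calc _ ≤ ∑ s, ∑ a, (d s * π s a * (γ * ((∑ s', p s a s' * M s') * ‖θ₁ - θ₂‖))) * Lq s a := by
          refine (norm_sum_le _ _).trans (sum_le_sum fun s _ => ?_)
          refine (norm_sum_le _ _).trans (sum_le_sum fun a _ => ?_)
          have hdp := mul_nonneg (hd s) (hπ s a)
          rw [norm_smul, Real.norm_eq_abs, abs_mul, abs_mul γ, abs_of_nonneg hdp,
            abs_of_nonneg hγ]
          refine mul_le_mul ?_ (hDqB s a w) (norm_nonneg _) ?_
          · exact mul_le_mul_of_nonneg_left (mul_le_mul_of_nonneg_left (hin s a) hγ) hdp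
          · exact mul_nonneg hdp (mul_nonneg hγ (mul_nonneg (hP0 s a) (norm_nonneg _)))
      _ = _ := by
          rw [mul_sum, sum_mul]
          refine sum_congr rfl fun s _ => ?_
          rw [mul_sum, mul_sum, sum_mul]
          exact sum_congr rfl fun a _ => by ring
  · refine mul_le_mul_of_nonneg_left ?_ hγ
    calc _ ≤ ∑ s, d s * K ^ 2 := by
          refine sum_le_sum fun s _ => mul_le_mul_of_nonneg_left ?_ (hd s)
          calc _ ≤ ∑ a, π s a * K ^ 2 := by
                refine sum_le_sum fun a _ => ?_
                rw [mul_assoc, sq]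
                exact mul_le_mul_of_nonneg_left
                  (mul_le_mul (hLK s a) (hPK s a) (hP0 s a) hK0) (hπ s a)
            _ = _ := by rw [← sum_mul, hπ1, one_mul]
      _ = _ := by rw [← sum_mul, hd1, one_mul]
end
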